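/- Let D be an unbounded domain in ℂⁿ admitting a psh peak function φ for p = ∞. Then for any neighborhood U of ∞ there exist a neighborhood V ⊂ U of ∞ and a constant m > 0 such that for all z ∈ D ∩ V and all X ∈ ℂⁿ one has K_D(z;X) ≥ e^{mφ(z)} K_{D∩U}(z;X). -/

import Mathlib

open Set Metric Filter Topology
open scoped Classical

noncomputable section

/-- `ℂⁿ` with the Euclidean norm. -/
abbrev Cn (n : ℕ) := EuclideanSpace ℂ (Fin n)

/-- A function `u : ℂⁿ → [-∞,∞)` (with values in `EReal`) is plurisubharmonic on `D` if it
is upper semicontinuous on `D` and satisfies the sub-mean-value inequality on every closed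
disc in a complex line contained in `D` (stated via continuous majorants on the boundary
circle, so as to handle the value `-∞`). -/
def PSHOn {n : ℕ} (u : Cn n → EReal) (D : Set (Cn n)) : Prop :=
  UpperSemicontinuousOn u D ∧
  ∀ a ∈ D, ∀ b : Cn n, ∀ r : ℝ, 0 < r →
    (∀ t : ℂ, ‖t‖ ≤ r → a + t • b ∈ D) →
    ∀ g : ℝ → ℝ, Continuous g →
      (∀ θ : ℝ, u (a + ((r : ℂ) * Complex.exp (θ * Complex.I)) • b) ≤ (g θ : EReal)) →
      u a ≤ (((1 / (2 * Real.pi)) * ∫ θ in (0:ℝ)..(2 * Real.pi), g θ : ℝ) : EReal)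

/-- `φ` is a psh peak function for the unbounded domain `D` at `p = ∞`:
`φ` is psh on `D`, `φ(z) → 0` as `|z| → ∞` in `D`, and `sup_{D∖U} φ < 0` for every
neighborhood `U` of `∞` (i.e. every set of the cobounded filter). -/
def IsPshPeakFnAtInfty {n : ℕ} (D : Set (Cn n)) (φ : Cn n → EReal) : Prop :=
  PSHOn φ D ∧ Tendsto φ (Bornology.cobounded (Cn n) ⊓ 𝓟 D) (𝓝 (0 : EReal)) ∧
  ∀ U ∈ Bornology.cobounded (Cn n), ∃ c : ℝ, c < 0 ∧ ∀ z ∈ D \ U, φ z ≤ (c : EReal)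

/-- The real exponential extended to `EReal`, with `exp(-∞) = 0` (the value at `⊤`,
irrelevant here, is also set to `0`). -/
def erexp (x : EReal) : ℝ := if x = ⊥ then 0 else if x = ⊤ then 0 else Real.exp x.toReal

/-- The Kobayashi metric of `D`:
`K_D(z;X) = inf {|α| : ∃ f : 𝔻 → D holomorphic, f 0 = z, α • f' 0 = X}`. -/
def kobayashi {n : ℕ} (D : Set (Cn n)) (z X : Cn n) : ℝ :=
  sInf {c : ℝ | ∃ α : ℂ, c = ‖α‖ ∧ ∃ f : ℂ → Cn n,
    DifferentiableOn ℂ f (ball (0:ℂ) 1) ∧ MapsTo f (ball (0:ℂ) 1) D ∧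
    f 0 = z ∧ α • deriv f 0 = X}

/-!
Put `u = m φ`. If an analytic disc `f` in `D` centred at `z` leaves `U` at the parameter `ζ₀`, then
`e ^ u(z) ≤ ‖ζ₀‖`. Hence `f` maps the disc of radius `e ^ u(z)` into `D ∩ U`, and rescaling it gives
the inequality between the Kobayashi metrics.

To bound `ζ₀`, choose radii `s < R` and a constant `t` such that `e ^ u(w)` is at most `t s` where
`‖w - f ζ₀‖ = s` and at least `t R` where `‖w - f ζ₀‖ = R`; this is possible for suitable `R` and
`m` because `φ` is bounded away from `0` on bounded sets and tends to `0` at infinity. The function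
equal to `e ^ u(w)` far from `f ζ₀`, to `t ‖w - f ζ₀‖` near it, and to their maximum in between, is
then log-plurisubharmonic and vanishes to first order at `f ζ₀`. Its pullback by `f`, divided by the
Blaschke factor of `ζ₀`, therefore obeys the maximum principle and is at most `1` at `0`, where the
Blaschke factor has modulus `‖ζ₀‖`.

The mean value inequality of `u` holds on affine discs only, so the log-subharmonicity of
`e ^ u(f ζ)` needs an argument. It is proved in the viscosity sense by doubling the variables: the
penalty `N ‖w - f ζ‖²` lets `w` leave the curve `f`, and at a maximum of the penalized function one
compares along the complex line in the direction of `f'`.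
-/

open InnerProductSpace Real
open scoped ComplexConjugate

section Erexp

variable {x : EReal} {t : ℝ}

@[simp]
lemma erexp_bot : erexp ⊥ = 0 := by simp [erexp]

@[simp]
lemma erexp_coe (t : ℝ) : erexp t = exp t := by simp [erexp]

lemma erexp_nonneg (x : EReal) : 0 ≤ erexp x := by
  unfold erexp
  split_ifs <;> positivity

lemma erexp_le_exp_iff (hx : x ≠ ⊤) : erexp x ≤ exp t ↔ x ≤ t := by
  induction x with
  | bot => simp [(exp_pos t).le]
  | coe s => simp
  | top => exact absurd rfl hx

lemma erexp_lt_exp_iff (hx : x ≠ ⊤) : erexp x < exp t ↔ x < t := by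
  induction x with
  | bot => simp [exp_pos]
  | coe s => simp
  | top => exact absurd rfl hx

lemma exp_le_erexp (hx : x ≠ ⊤) (h : (t : EReal) ≤ x) : exp t ≤ erexp x := by
  rw [← not_lt, erexp_lt_exp_iff hx]
  exact h.not_gt

lemma erexp_le_one (hx : x ≤ 0) : erexp x ≤ 1 := by
  rw [← exp_zero, erexp_le_exp_iff (ne_top_of_le_ne_top EReal.zero_ne_top hx)]
  exact hx

lemma eq_coe_log_erexp (hx : 0 < erexp x) : x = (log (erexp x) : ℝ) := by
  induction x with
  | bot => simp at hx
  | coe s => simp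
  | top => simp [erexp] at hx

end Erexp

/-- `log P` is subharmonic at `p` in the viscosity sense: no `C²` function `q` with `Δ q < 0`
touches it from above at `p`. Such `q` are represented by `-h - ε ‖· - p‖²` with `h` harmonic near
`p`, and the condition is phrased for `P` itself so that `log P p = -∞` needs no special value. -/
def LogSubharmonicAt (P : ℂ → ℝ) (p : ℂ) : Prop :=
  0 < P p → ∀ h : ℂ → ℝ, HarmonicAt h p → ∀ ε > 0,
    ¬ IsLocalMax (fun ζ => P ζ * exp (h ζ + ε * ‖ζ - p‖ ^ 2)) p

namespace LogSubharmonicAt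

variable {P Q : ℂ → ℝ} {p : ℂ}

lemma of_eventually_le (hQ : LogSubharmonicAt Q p) (hle : ∀ᶠ ζ in 𝓝 p, Q ζ ≤ P ζ)
    (heq : Q p = P p) : LogSubharmonicAt P p := by
  intro hPp h hh ε hε hmax
  refine hQ (heq ▸ hPp) h hh ε hε ?_
  filter_upwards [hle, hmax] with ζ hζ hζmax
  rw [heq]
  exact (mul_le_mul_of_nonneg_right hζ (exp_pos _).le).trans hζmax

lemma mul_exp {g : ℂ → ℝ} (hP : LogSubharmonicAt P p) (hg : HarmonicAt g p) :
    LogSubharmonicAt (fun ζ => P ζ * exp (g ζ)) p := by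
  intro hPp h hh ε hε hmax
  refine hP (pos_of_mul_pos_left hPp (exp_pos _).le) (g + h) (hg.add hh) ε hε ?_
  simpa only [mul_assoc, ← exp_add, ← add_assoc, Pi.add_apply] using hmax

lemma mul_norm {F : ℂ → ℂ} (hP : LogSubharmonicAt P p) (hF : AnalyticAt ℂ F p) :
    LogSubharmonicAt (fun ζ => P ζ * ‖F ζ‖) p := by
  rcases eq_or_ne (F p) 0 with hFp | hFp
  · intro hpos
    simp [hFp] at hpos
  · have hev : (fun ζ => P ζ * exp (log ‖F ζ‖)) =ᶠ[𝓝 p] fun ζ => P ζ * ‖F ζ‖ := by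
      filter_upwards [hF.continuousAt.eventually_ne hFp] with ζ hζ
      rw [exp_log (norm_pos_iff.2 hζ)]
    exact (hP.mul_exp (hF.harmonicAt_log_norm hFp)).of_eventually_le hev.le hev.eq_of_nhds

/-- `‖ζ - c‖²` and `‖ζ - p‖²` differ by a harmonic function of `ζ`. -/
lemma not_isLocalMax_mul_exp {h : ℂ → ℝ} {ε : ℝ} (hP : LogSubharmonicAt P p) (hPp : 0 < P p)
    (hh : HarmonicAt h p) (hε : 0 < ε) (c : ℂ) :
    ¬ IsLocalMax (fun ζ => P ζ * exp (h ζ + ε * ‖ζ - c‖ ^ 2)) p := by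
  have hcentre (ζ : ℂ) : ‖ζ - c‖ ^ 2 =
      ((2 * conj (p - c)) * (ζ - p)).re + ‖p - c‖ ^ 2 + ‖ζ - p‖ ^ 2 := by
    simp only [← Complex.normSq_eq_norm_sq, Complex.normSq_apply, Complex.mul_re, Complex.mul_im,
      Complex.sub_re, Complex.sub_im, Complex.conj_re, Complex.conj_im, Complex.re_ofNat,
      Complex.im_ofNat, map_sub]
    ring
  have hlin : HarmonicAt (fun ζ => ((2 * conj (p - c)) * (ζ - p)).re + ‖p - c‖ ^ 2) p :=
    (AnalyticAt.harmonicAt_re (f := fun ζ => (2 * conj (p - c)) * (ζ - p)) (by fun_prop)).add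
      (harmonicAt_const _)
  intro hmax
  refine hP hPp _ (hh.add (hlin.const_smul (c := ε))) ε hε ?_
  convert hmax using 4 with ζ
  rw [hcentre ζ]
  simp only [Pi.add_apply, Pi.smul_apply, smul_eq_mul]
  ring

lemma of_eventually_mul_exp_neg_le (hQ : LogSubharmonicAt Q p)
    (hle : ∀ ε > 0, ∀ᶠ ζ in 𝓝 p, Q ζ * exp (-(ε * ‖ζ - p‖ ^ 2)) ≤ P ζ) (heq : Q p = P p) :
    LogSubharmonicAt P p := by
  intro hPp h hh ε hε hmax
  refine hQ (heq ▸ hPp) h hh (ε / 2) (half_pos hε) ?_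
  filter_upwards [hle (ε / 2) (half_pos hε), hmax] with ζ hζ hζmax
  calc Q ζ * exp (h ζ + ε / 2 * ‖ζ - p‖ ^ 2)
      = Q ζ * exp (-(ε / 2 * ‖ζ - p‖ ^ 2)) * exp (h ζ + ε * ‖ζ - p‖ ^ 2) := by
        rw [mul_assoc, ← exp_add]
        ring_nf
    _ ≤ P ζ * exp (h ζ + ε * ‖ζ - p‖ ^ 2) := mul_le_mul_of_nonneg_right hζ (exp_pos _).le
    _ ≤ P p * exp (h p + ε * ‖p - p‖ ^ 2) := hζmax
    _ = Q p * exp (h p + ε / 2 * ‖p - p‖ ^ 2) := by simp [heq]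

/-- Near `p`, `‖F‖²` is harmonic up to `o(‖ζ - p‖²)`. -/
lemma mul_exp_neg_norm_sq {E : Type*} [NormedAddCommGroup E] [InnerProductSpace ℂ E]
    {F : ℂ → E} (hP : LogSubharmonicAt P p) (hP0 : ∀ᶠ ζ in 𝓝 p, 0 ≤ P ζ) (hF : AnalyticAt ℂ F p)
    (hF' : deriv F p = 0) {N : ℝ} (hN : 0 ≤ N) :
    LogSubharmonicAt (fun ζ => P ζ * exp (-(N * ‖F ζ‖ ^ 2))) p := by
  have hharm : HarmonicAt (fun ζ => ‖F p‖ ^ 2 + (2 * ⟪F p, F ζ - F p⟫_ℂ).re) p := by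
    refine (harmonicAt_const _).add
      (AnalyticAt.harmonicAt_re (f := fun ζ => 2 * ⟪F p, F ζ - F p⟫_ℂ) ?_)
    exact analyticAt_const.mul (((innerSL ℂ (F p)).analyticAt _).comp (hF.sub analyticAt_const))
  have hexpand (ζ : ℂ) : ‖F ζ‖ ^ 2 =
      ‖F p‖ ^ 2 + (2 * ⟪F p, F ζ - F p⟫_ℂ).re + ‖F ζ - F p‖ ^ 2 := by
    have := norm_add_sq (𝕜 := ℂ) (F p) (F ζ - F p)
    rwa [add_sub_cancel, RCLike.re_eq_complex_re, ← Complex.re_ofReal_mul,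
      Complex.ofReal_ofNat] at this
  refine (hP.mul_exp (hharm.const_smul (c := -N))).of_eventually_mul_exp_neg_le
    (fun ε hε => ?_) (by simp)
  have hδ : 0 < √(ε / (N + 1)) := by positivity
  filter_upwards [hF.differentiableAt.hasDerivAt.isLittleO.def hδ, hP0] with ζ hζ hζ0
  rw [hF', smul_zero, sub_zero] at hζ
  have hsmall : N * ‖F ζ - F p‖ ^ 2 ≤ ε * ‖ζ - p‖ ^ 2 :=
    calc N * ‖F ζ - F p‖ ^ 2 ≤ (N + 1) * (√(ε / (N + 1)) * ‖ζ - p‖) ^ 2 := by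
          gcongr; linarith
      _ = ε * ‖ζ - p‖ ^ 2 := by
          rw [mul_pow, Real.sq_sqrt (by positivity)]
          field_simp
  rw [mul_assoc, ← exp_add, hexpand ζ]
  refine mul_le_mul_of_nonneg_left (exp_le_exp.2 ?_) hζ0
  simp only [Pi.smul_apply, smul_eq_mul]
  linarith

end LogSubharmonicAt

lemma logSubharmonicAt_erexp_of_le_circleAverage {u : ℂ → EReal} {p : ℂ}
    (htop : ∀ᶠ ζ in 𝓝 p, u ζ ≠ ⊤)
    (hsub : ∀ᶠ r in 𝓝[>] (0 : ℝ), ∀ g : ℂ → ℝ, ContinuousOn g (sphere p r) →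
      (∀ ζ ∈ sphere p r, u ζ ≤ g ζ) → u p ≤ circleAverage g p r) :
    LogSubharmonicAt (fun ζ => erexp (u ζ)) p := by
  intro hpos h hh ε hε hmax
  set t := log (erexp (u p))
  have hup : u p = t := eq_coe_log_erexp hpos
  have hbound : ∀ᶠ ζ in 𝓝 p, HarmonicAt h ζ ∧ u ζ ≤ (t + h p - ε * ‖ζ - p‖ ^ 2 - h ζ : ℝ) := by
    filter_upwards [hh.eventually, hmax, htop] with ζ hζ hζmax hζtop
    refine ⟨hζ, (erexp_le_exp_iff hζtop).1 ?_⟩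
    rw [← mul_le_mul_iff_left₀ (exp_pos (h ζ + ε * ‖ζ - p‖ ^ 2)), ← exp_add]
    refine hζmax.trans_eq ?_
    rw [hup, erexp_coe, ← exp_add, sub_self, norm_zero]
    ring_nf
  obtain ⟨ρ, hρ, hball⟩ := Metric.eventually_nhds_iff_ball.1 hbound
  obtain ⟨r, hr, hr0, hrρ⟩ := (hsub.and (Ioo_mem_nhdsGT hρ)).exists
  have hsubset : closedBall p r ⊆ ball p ρ := closedBall_subset_ball hrρ
  have hg : HarmonicOnNhd (fun ζ => (t + h p - ε * r ^ 2) - h ζ) (closedBall p |r|) := by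
    rw [abs_of_pos hr0]
    exact fun ζ hζ => (harmonicAt_const _).sub (hball ζ (hsubset hζ)).1
  have hle := hr _ ((hg.mono (by rw [abs_of_pos hr0]; exact sphere_subset_closedBall)).continuousOn)
    fun ζ hζ => by
      have := (hball ζ (hsubset (sphere_subset_closedBall hζ))).2
      rwa [mem_sphere_iff_norm.1 hζ] at this
  rw [hg.circleAverage_eq, hup, EReal.coe_le_coe_iff] at hle
  have : 0 < ε * r ^ 2 := by positivity
  linarith

lemma logSubharmonicAt_one (p : ℂ) : LogSubharmonicAt (fun _ => 1) p := by
  have h0 : LogSubharmonicAt (fun _ => erexp ((0 : ℝ) : EReal)) p := by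
    refine logSubharmonicAt_erexp_of_le_circleAverage (by simp) ?_
    filter_upwards [self_mem_nhdsWithin] with r hr g _ hle
    rw [EReal.coe_le_coe_iff]
    refine circleAverage_nonneg_of_nonneg fun ζ hζ => ?_
    rw [abs_of_pos hr] at hζ
    exact EReal.coe_le_coe_iff.1 (hle ζ hζ)
  simpa only [erexp_coe, exp_zero] using h0

lemma logSubharmonicAt_norm {E : Type*} [NormedAddCommGroup E] [NormedSpace ℂ E] {F : ℂ → E} {p : ℂ}
    (hF : AnalyticAt ℂ F p) : LogSubharmonicAt (fun ζ => ‖F ζ‖) p := by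
  obtain ⟨g, hg, hgF⟩ := exists_dual_vector'' ℂ (F p)
  have hgF' : LogSubharmonicAt (fun ζ => 1 * ‖g (F ζ)‖) p :=
    (logSubharmonicAt_one p).mul_norm ((g.analyticAt _).comp hF)
  refine hgF'.of_eventually_le (.of_forall fun ζ => ?_) ?_
  · simpa using g.le_of_opNorm_le hg (F ζ)
  · simp [hgF]

section UpperSemicontinuous

variable {X : Type*} [TopologicalSpace X] {S : Set X}

lemma upperSemicontinuousOn_mul {f g : X → ℝ} (hf : UpperSemicontinuousOn f S)
    (hg : ContinuousOn g S) (hg0 : ∀ x ∈ S, 0 ≤ g x) :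
    UpperSemicontinuousOn (fun x => f x * g x) S := by
  intro x hx y hy
  have hcont : Tendsto (fun c => c * g x) (𝓝[>] f x) (𝓝 (f x * g x)) :=
    (Continuous.tendsto (by fun_prop) _).mono_left nhdsWithin_le_nhds
  obtain ⟨c, hcy, hfc⟩ := ((hcont.eventually_lt_const hy).and self_mem_nhdsWithin).exists
  filter_upwards [hf x hx c hfc, ((hg x hx).const_mul c).eventually_lt_const hcy,
    self_mem_nhdsWithin] with z hfz hcz hzS
  exact (mul_le_mul_of_nonneg_right hfz.le (hg0 z hzS)).trans_lt hcz

lemma upperSemicontinuous_indicator {f : X → ℝ} (hS : IsClosed S)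
    (hf : UpperSemicontinuousOn f S) (hf0 : ∀ x ∈ S, 0 ≤ f x) :
    UpperSemicontinuous (S.indicator f) := by
  intro x y hy
  by_cases hx : x ∈ S
  · rw [indicator_of_mem hx] at hy
    filter_upwards [eventually_nhdsWithin_iff.1 (hf x hx y hy)] with z hz
    by_cases hzS : z ∈ S
    · simpa [hzS] using hz hzS
    · simpa [hzS] using (hf0 x hx).trans_lt hy
  · rw [indicator_of_notMem hx] at hy
    filter_upwards [hS.isOpen_compl.mem_nhds hx] with z hz
    rwa [indicator_of_notMem hz]

lemma upperSemicontinuousOn_erexp {u : X → EReal} (hu : UpperSemicontinuousOn u S)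
    (htop : ∀ x ∈ S, u x ≠ ⊤) : UpperSemicontinuousOn (fun x => erexp (u x)) S := by
  intro x hx y hy
  have hy0 : 0 < y := (erexp_nonneg _).trans_lt hy
  rw [← exp_log hy0, erexp_lt_exp_iff (htop x hx)] at hy
  filter_upwards [hu x hx _ hy, self_mem_nhdsWithin] with z hz hzS
  rwa [← exp_log hy0, erexp_lt_exp_iff (htop z hzS)]

/-- As `N → ∞`, the maximizers are driven first to the zero set of `d`, then to the maximizer `x₀`
of `Q` there. -/
lemma exists_isMaxOn_mul_exp_neg_mem_nhds {Q d : X → ℝ} {x₀ : X} {V : Set X} (hS : IsCompact S)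
    (hQ : UpperSemicontinuousOn Q S) (hd : ContinuousOn d S) (hd0 : ∀ x ∈ S, 0 ≤ d x)
    (hx₀ : x₀ ∈ S) (hdx₀ : d x₀ = 0) (hQx₀ : 0 < Q x₀)
    (hstrict : ∀ x ∈ S, d x = 0 → x ≠ x₀ → Q x < Q x₀) (hV : V ∈ 𝓝 x₀) :
    ∃ N : ℝ, 0 ≤ N ∧ ∃ x ∈ S ∩ V, IsMaxOn (fun x => Q x * exp (-(N * d x))) S x := by
  have husc (N : ℝ) : UpperSemicontinuousOn (fun x => Q x * exp (-(N * d x))) S :=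
    upperSemicontinuousOn_mul hQ (by fun_prop) fun _ _ => (exp_pos _).le
  have hpt : ∀ x ∈ S \ interior V, ∃ N, Q x * exp (-(N * d x)) < Q x₀ := by
    intro x hx
    rcases (hd0 x hx.1).eq_or_lt with hdx | hdx
    · refine ⟨0, ?_⟩
      simpa using hstrict x hx.1 hdx.symm fun h => hx.2 (h ▸ mem_interior_iff_mem_nhds.2 hV)
    · have hlim : Tendsto (fun N : ℝ => Q x * exp (-(N * d x))) atTop (𝓝 (Q x * 0)) :=
        (tendsto_exp_neg_atTop_nhds_zero.comp (tendsto_id.atTop_mul_const hdx)).const_mul _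
      exact (hlim.eventually_lt_const (by simpa using hQx₀)).exists
  have hfar : ∀ᶠ N in atTop, ∀ x ∈ S \ interior V, Q x * exp (-(N * d x)) < Q x₀ := by
    refine (hS.diff isOpen_interior).induction_on (by simp)
      (fun s t hst ht => ht.mono fun N hN x hx => hN x (hst hx))
      (fun s t hs ht => (hs.and ht).mono fun N hN x hx => hx.elim (hN.1 x) (hN.2 x))
      fun x hx => ?_
    obtain ⟨N, hN⟩ := hpt x hx
    refine ⟨_, inter_mem (nhdsWithin_mono _ sdiff_subset (husc N x hx.1 _ hN))
      (nhdsWithin_mono _ sdiff_subset self_mem_nhdsWithin), ?_⟩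
    filter_upwards [eventually_ge_atTop N] with N' hN' z ⟨hz, hzS⟩
    rcases le_or_gt (Q z) 0 with hQz | hQz
    · exact (mul_nonpos_of_nonpos_of_nonneg hQz (exp_pos _).le).trans_lt hQx₀
    · have := hd0 z hzS
      exact lt_of_le_of_lt (by gcongr) hz
  obtain ⟨N, hN, hN0⟩ := (hfar.and (eventually_ge_atTop 0)).exists
  obtain ⟨x, hx, hmax⟩ := (husc N).exists_isMaxOn ⟨x₀, hx₀⟩ hS
  have hxV : x ∈ interior V := by
    by_contra hxV
    have hle : Q x₀ * exp (-(N * d x₀)) ≤ Q x * exp (-(N * d x)) := hmax hx₀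
    rw [hdx₀, mul_zero, neg_zero, exp_zero, mul_one] at hle
    exact (hN x ⟨hx, hxV⟩).not_ge hle
  exact ⟨N, hN0, x, ⟨hx, interior_subset hxV⟩, hmax⟩

lemma exists_isLocalMax_penalized [LocallyCompactSpace X] {E : Type*} [NormedAddCommGroup E]
    [LocallyCompactSpace E] {D : Set E} {v : E → ℝ} {f : X → E} {g : X → ℝ} {p : X}
    {V : Set (X × E)} (hD : IsOpen D) (hv : UpperSemicontinuousOn v D)
    (hf : ∀ᶠ ζ in 𝓝 p, ContinuousAt f ζ) (hg : ∀ᶠ ζ in 𝓝 p, ContinuousAt g ζ)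
    (hg0 : ∀ ζ, 0 ≤ g ζ) (hfp : f p ∈ D) (hpos : 0 < v (f p) * g p)
    (hstrict : ∀ᶠ ζ in 𝓝[≠] p, v (f ζ) * g ζ < v (f p) * g p) (hV : V ∈ 𝓝 (p, f p)) :
    ∃ N : ℝ, 0 ≤ N ∧ ∃ x ∈ V, 0 < v x.2 * g x.1 ∧
      IsLocalMax (fun x : X × E => v x.2 * g x.1 * exp (-(N * ‖x.2 - f x.1‖ ^ 2))) x := by
  obtain ⟨S, hSnhds, hSsub, hS⟩ := local_compact_nhds (prod_mem_nhds
    ((hf.and hg).and (eventually_nhdsWithin_iff.1 hstrict)) (hD.mem_nhds hfp))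
  have hQ : UpperSemicontinuousOn (fun x : X × E => v x.2 * g x.1) S :=
    upperSemicontinuousOn_mul (hv.comp continuousOn_snd fun x hx => (hSsub hx).2)
      (fun x hx => ((hSsub hx).1.1.2.comp continuousAt_fst).continuousWithinAt) fun x _ => hg0 x.1
  have hd : ContinuousOn (fun x : X × E => ‖x.2 - f x.1‖ ^ 2) S := fun x hx =>
    ((continuousAt_snd.sub ((hSsub hx).1.1.1.comp continuousAt_fst)).norm.pow 2).continuousWithinAt
  obtain ⟨N, hN, x, ⟨-, hxS, hxV⟩, hmax⟩ := exists_isMaxOn_mul_exp_neg_mem_nhds hS hQ hd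
    (fun _ _ => by positivity) (mem_of_mem_nhds hSnhds) (by simp) hpos
    (fun x hx hdx hne => by
      have hxf : x.2 = f x.1 := by simpa [sub_eq_zero] using hdx
      rw [hxf]
      exact (hSsub hx).1.2 fun h : x.1 = p => hne (Prod.ext h (hxf.trans (h ▸ rfl))))
    (inter_mem (interior_mem_nhds.2 hSnhds) hV)
  have hle : v (f p) * g p ≤ v x.2 * g x.1 * exp (-(N * ‖x.2 - f x.1‖ ^ 2)) := by
    simpa using hmax (mem_of_mem_nhds hSnhds)
  exact ⟨N, hN, x, hxV, pos_of_mul_pos_left (hpos.trans_le hle) (exp_pos _).le,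
    hmax.isLocalMax (mem_interior_iff_mem_nhds.1 hxS)⟩

end UpperSemicontinuous

section MaximumPrinciple

variable {K : Set ℂ} {P P₁ P₂ δ : ℂ → ℝ} {M R s : ℝ}

theorem le_of_logSubharmonicAt_of_le_diff_interior (hK : IsCompact K)
    (hP : UpperSemicontinuousOn P K) (hsub : ∀ p ∈ interior K, LogSubharmonicAt P p) (hM : 0 ≤ M)
    (hbd : ∀ p ∈ K \ interior K, P p ≤ M) {p : ℂ} (hp : p ∈ K) : P p ≤ M := by
  by_contra! hlt
  obtain ⟨B, hB⟩ := hK.isBounded.exists_norm_le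
  have hlim : Tendsto (fun ε => M * exp (ε * B ^ 2)) (𝓝[>] 0) (𝓝 M) := by
    have : Continuous fun ε => M * exp (ε * B ^ 2) := by fun_prop
    simpa using (this.tendsto 0).mono_left nhdsWithin_le_nhds
  obtain ⟨ε, hε, hε0 : 0 < ε⟩ := ((hlim.eventually_lt_const hlt).and self_mem_nhdsWithin).exists
  obtain ⟨q, hq, hmax⟩ := (upperSemicontinuousOn_mul (g := fun ζ => exp (0 + ε * ‖ζ - 0‖ ^ 2)) hP
    (by fun_prop) fun _ _ => (exp_pos _).le).exists_isMaxOn ⟨p, hp⟩ hK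
  have hMPq : M < P q := by
    by_contra! hPq
    refine hε.not_ge ?_
    calc P p ≤ P p * exp (0 + ε * ‖p - 0‖ ^ 2) :=
          le_mul_of_one_le_right (hM.trans hlt.le) (one_le_exp (by positivity))
      _ ≤ P q * exp (0 + ε * ‖q - 0‖ ^ 2) := hmax hp
      _ ≤ M * exp (ε * B ^ 2) := by
        rw [zero_add, sub_zero]
        gcongr
        exact hB q hq
  have hqint : q ∈ interior K := by
    by_contra hqint
    exact (hbd q ⟨hq, hqint⟩).not_gt hMPq
  exact (hsub q hqint).not_isLocalMax_mul_exp (hM.trans_lt hMPq) (harmonicAt_const 0) hε0 0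
    (hmax.isLocalMax (mem_interior_iff_mem_nhds.1 hqint))

lemma logSubharmonicAt_sup_indicator (hδ : ContinuousOn δ K) (hsR : s < R)
    (hP₁0 : ∀ ζ ∈ K, 0 ≤ P₁ ζ) (hP₂0 : ∀ ζ ∈ K, 0 ≤ P₂ ζ)
    (hle₂₁ : ∀ ζ ∈ K, δ ζ = s → P₂ ζ ≤ P₁ ζ) (hle₁₂ : ∀ ζ ∈ K, δ ζ = R → P₁ ζ ≤ P₂ ζ)
    (hsub₁ : ∀ ζ ∈ interior K, δ ζ < R → LogSubharmonicAt P₁ ζ)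
    (hsub₂ : ∀ ζ ∈ interior K, s < δ ζ → LogSubharmonicAt P₂ ζ) {p : ℂ} (hp : p ∈ interior K) :
    LogSubharmonicAt ((K ∩ {ζ | δ ζ ≤ R}).indicator P₁ ⊔ (K ∩ {ζ | s ≤ δ ζ}).indicator P₂) p := by
  set P := (K ∩ {ζ | δ ζ ≤ R}).indicator P₁ ⊔ (K ∩ {ζ | s ≤ δ ζ}).indicator P₂
  have hpK : p ∈ K := interior_subset hp
  have hKp : K ∈ 𝓝 p := mem_interior_iff_mem_nhds.1 hp
  have hδp : ContinuousAt δ p := hδ.continuousAt hKp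
  have of_left (hR : δ p < R) (heq : P₁ p = P p) : LogSubharmonicAt P p := by
    refine (hsub₁ p hp hR).of_eventually_le ?_ heq
    filter_upwards [hKp, hδp.eventually_lt_const hR] with ζ hζ hζR
    exact le_sup_of_le_left (indicator_of_mem (s := K ∩ {ζ | δ ζ ≤ R}) ⟨hζ, hζR.le⟩ P₁).ge
  have of_right (hs : s < δ p) (heq : P₂ p = P p) : LogSubharmonicAt P p := by
    refine (hsub₂ p hp hs).of_eventually_le ?_ heq
    filter_upwards [hKp, hδp.eventually_const_lt hs] with ζ hζ hζs
    exact le_sup_of_le_right (indicator_of_mem (s := K ∩ {ζ | s ≤ δ ζ}) ⟨hζ, hζs.le⟩ P₂).ge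
  rcases lt_trichotomy (δ p) s with hs | hs | hs
  · exact of_left (hs.trans hsR) (by simp [P, hpK, hs.not_ge, (hs.trans hsR).le, hP₁0 p hpK])
  · exact of_left (hs ▸ hsR) (by simp [P, hpK, hs, hsR.le, hle₂₁ p hpK hs])
  rcases lt_trichotomy (δ p) R with hR | hR | hR
  · rcases le_total (P₁ p) (P₂ p) with hle | hle
    · exact of_right hs (by simp [P, hpK, hs.le, hR.le, hle])
    · exact of_left hR (by simp [P, hpK, hs.le, hR.le, hle])
  · exact of_right hs (by simp [P, hpK, hR, hsR.le, hle₁₂ p hpK hR])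
  · exact of_right hs (by simp [P, hpK, hs.le, hR.not_ge, hP₂0 p hpK])

/-- The maximum principle for the function equal to `P₁` on `{δ < s}`, to `max P₁ P₂` on
`{s ≤ δ ≤ R}` and to `P₂` on `{R < δ}`. -/
theorem le_of_logSubharmonicAt_of_glue (hK : IsCompact K) (hδ : ContinuousOn δ K) (hsR : s < R)
    (hP₁ : UpperSemicontinuousOn P₁ (K ∩ {ζ | δ ζ ≤ R})) (hP₁0 : ∀ ζ ∈ K, 0 ≤ P₁ ζ)
    (hP₂ : UpperSemicontinuousOn P₂ (K ∩ {ζ | s ≤ δ ζ})) (hP₂0 : ∀ ζ ∈ K, 0 ≤ P₂ ζ)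
    (hle₂₁ : ∀ ζ ∈ K, δ ζ = s → P₂ ζ ≤ P₁ ζ) (hle₁₂ : ∀ ζ ∈ K, δ ζ = R → P₁ ζ ≤ P₂ ζ)
    (hsub₁ : ∀ ζ ∈ interior K, δ ζ < R → LogSubharmonicAt P₁ ζ)
    (hsub₂ : ∀ ζ ∈ interior K, s < δ ζ → LogSubharmonicAt P₂ ζ)
    (hM : 0 ≤ M) (hbd₁ : ∀ ζ ∈ K \ interior K, δ ζ ≤ R → P₁ ζ ≤ M)
    (hbd₂ : ∀ ζ ∈ K \ interior K, s ≤ δ ζ → P₂ ζ ≤ M) {p : ℂ} (hp : p ∈ K) (hps : s ≤ δ p) :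
    P₂ p ≤ M := by
  set K₁ := K ∩ {ζ | δ ζ ≤ R}
  set K₂ := K ∩ {ζ | s ≤ δ ζ}
  have hK₁ : IsClosed K₁ := hδ.preimage_isClosed_of_isClosed hK.isClosed isClosed_Iic
  have hK₂ : IsClosed K₂ := hδ.preimage_isClosed_of_isClosed hK.isClosed isClosed_Ici
  have hP : UpperSemicontinuousOn (K₁.indicator P₁ ⊔ K₂.indicator P₂) K :=
    ((upperSemicontinuous_indicator hK₁ hP₁ fun ζ hζ => hP₁0 ζ hζ.1).upperSemicontinuousOn _).sup
      ((upperSemicontinuous_indicator hK₂ hP₂ fun ζ hζ => hP₂0 ζ hζ.1).upperSemicontinuousOn _)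
  have hle := le_of_logSubharmonicAt_of_le_diff_interior hK hP
    (fun ζ hζ => logSubharmonicAt_sup_indicator hδ hsR hP₁0 hP₂0 hle₂₁ hle₁₂ hsub₁ hsub₂ hζ) hM
    (fun ζ hζ => ?_) hp
  · refine le_trans ?_ hle
    simp [K₂, hp, hps]
  · simp only [Pi.sup_apply, indicator_apply]
    refine sup_le ?_ ?_ <;> split_ifs with h
    exacts [hbd₁ ζ hζ h.2, hM, hbd₂ ζ hζ h.2, hM]

end MaximumPrinciple

namespace PSHOn

variable {n : ℕ} {D : Set (Cn n)} {u : Cn n → EReal}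

lemma le_circleAverage (hu : PSHOn u D) {a b : Cn n} {p : ℂ} {r : ℝ} (hr : 0 < r)
    (hdisc : ∀ ζ ∈ closedBall p r, a + (ζ - p) • b ∈ D) {g : ℂ → ℝ}
    (hg : ContinuousOn g (sphere p r)) (hle : ∀ ζ ∈ sphere p r, u (a + (ζ - p) • b) ≤ g ζ) :
    u a ≤ circleAverage g p r := by
  have ha : a ∈ D := by simpa using hdisc p (mem_closedBall_self hr.le)
  rw [circleAverage, smul_eq_mul, ← one_div]
  refine hu.2 a ha b r hr (fun t ht => ?_) (fun θ => g (circleMap p r θ))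
    (hg.comp_continuous (continuous_circleMap p r) (circleMap_mem_sphere p hr.le)) fun θ => ?_
  · simpa using hdisc (p + t) (by simpa using ht)
  · simpa [circleMap] using hle _ (circleMap_mem_sphere p hr.le θ)

lemma logSubharmonicAt_line (hu : PSHOn u D) (hD : IsOpen D) (htop : ∀ z ∈ D, u z ≠ ⊤)
    {a : Cn n} (ha : a ∈ D) (b : Cn n) (p : ℂ) :
    LogSubharmonicAt (fun ζ => erexp (u (a + (ζ - p) • b))) p := by
  have hcont : Continuous fun ζ : ℂ => a + (ζ - p) • b := by fun_prop
  have hmem : ∀ᶠ ζ in 𝓝 p, a + (ζ - p) • b ∈ D :=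
    hcont.continuousAt.eventually_mem (hD.mem_nhds (by simpa using ha))
  refine logSubharmonicAt_erexp_of_le_circleAverage (hmem.mono fun ζ hζ => htop _ hζ) ?_
  obtain ⟨ρ, hρ, hball⟩ := Metric.eventually_nhds_iff_ball.1 hmem
  filter_upwards [Ioo_mem_nhdsGT hρ] with r hr g hg hle
  rw [sub_self, zero_smul, add_zero]
  exact hu.le_circleAverage hr.1 (fun ζ hζ => hball ζ (closedBall_subset_ball hr.2 hζ)) hg hle

/-- Restrict to the complex line `w = w₁ + (ζ - ζ₁) • f' ζ₁`, along which the penalty is harmonic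
up to `o(‖ζ - ζ₁‖²)`. -/
lemma not_isLocalMax_penalized (hu : PSHOn u D) (hD : IsOpen D) (htop : ∀ z ∈ D, u z ≠ ⊤)
    {f : ℂ → Cn n} {h : ℂ → ℝ} {ζ₁ : ℂ} {w₁ : Cn n} (hw₁ : w₁ ∈ D) (huw₁ : 0 < erexp (u w₁))
    (hf : AnalyticAt ℂ f ζ₁) (hh : HarmonicAt h ζ₁) {ε N : ℝ} (hε : 0 < ε) (hN : 0 ≤ N) (c : ℂ) :
    ¬ IsLocalMax (fun x : ℂ × Cn n => erexp (u x.2) * exp (h x.1 + ε * ‖x.1 - c‖ ^ 2) *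
      exp (-(N * ‖x.2 - f x.1‖ ^ 2))) (ζ₁, w₁) := by
  intro hmax
  set line : ℂ → Cn n := fun ζ => w₁ + (ζ - ζ₁) • deriv f ζ₁
  have hline : line ζ₁ = w₁ := by simp [line]
  have hderiv : deriv (fun ζ => line ζ - f ζ) ζ₁ = 0 := by
    have := (((hasDerivAt_id ζ₁).sub_const ζ₁).smul_const (deriv f ζ₁)).const_add w₁
    simpa [line, Pi.sub_def] using (this.sub hf.differentiableAt.hasDerivAt).deriv
  have hpen := (hu.logSubharmonicAt_line hD htop hw₁ (deriv f ζ₁) ζ₁).mul_exp_neg_norm_sq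
    (.of_forall fun ζ => erexp_nonneg _) (F := fun ζ => line ζ - f ζ) (by fun_prop) hderiv hN
  refine hpen.not_isLocalMax_mul_exp ?_ hh hε c ?_
  · exact mul_pos (by simpa using huw₁) (exp_pos _)
  · have hcont : ContinuousAt (fun ζ => (ζ, line ζ)) ζ₁ := by fun_prop
    have hmax' := IsLocalMax.comp_continuous (b := ζ₁) (g := fun ζ => (ζ, line ζ))
      (by simpa only [hline] using hmax) hcont
    simpa only [Function.comp_def, mul_right_comm] using hmax'

theorem logSubharmonicAt_comp (hu : PSHOn u D) (hD : IsOpen D) (htop : ∀ z ∈ D, u z ≠ ⊤)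
    {f : ℂ → Cn n} {p : ℂ} (hf : AnalyticAt ℂ f p) (hfp : f p ∈ D) :
    LogSubharmonicAt (fun ζ => erexp (u (f ζ))) p := by
  intro hpos h hh ε hε hmax
  have hcont : ∀ᶠ ζ in 𝓝 p, ContinuousAt (fun ζ => exp (h ζ + ε / 2 * ‖ζ - p‖ ^ 2)) ζ := by
    filter_upwards [hh.eventually] with ζ hζ
    have := hζ.1.continuousAt
    fun_prop
  have hstrict : ∀ᶠ ζ in 𝓝[≠] p, erexp (u (f ζ)) * exp (h ζ + ε / 2 * ‖ζ - p‖ ^ 2) <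
      erexp (u (f p)) * exp (h p + ε / 2 * ‖p - p‖ ^ 2) := by
    filter_upwards [hmax.filter_mono nhdsWithin_le_nhds, self_mem_nhdsWithin] with ζ hζ hne
    have hdist : 0 < ‖ζ - p‖ := norm_sub_pos_iff.2 hne
    rcases (erexp_nonneg (u (f ζ))).eq_or_lt with h0 | h0
    · rw [← h0, zero_mul]
      exact mul_pos hpos (exp_pos _)
    · calc erexp (u (f ζ)) * exp (h ζ + ε / 2 * ‖ζ - p‖ ^ 2)
          < erexp (u (f ζ)) * exp (h ζ + ε * ‖ζ - p‖ ^ 2) := by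
            gcongr
            exact half_lt_self hε
        _ ≤ erexp (u (f p)) * exp (h p + ε * ‖p - p‖ ^ 2) := hζ
        _ = erexp (u (f p)) * exp (h p + ε / 2 * ‖p - p‖ ^ 2) := by simp
  obtain ⟨N, hN, ⟨ζ₁, w₁⟩, ⟨⟨hh₁, hf₁⟩, hw₁⟩, hpos₁, hmax₁⟩ := exists_isLocalMax_penalized hD
    (upperSemicontinuousOn_erexp hu.1 htop)
    (hf.eventually_analyticAt.mono fun _ hζ => hζ.continuousAt)
    hcont (fun _ => (exp_pos _).le) hfp (mul_pos hpos (exp_pos _)) hstrict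
    (prod_mem_nhds (hh.eventually.and hf.eventually_analyticAt) (hD.mem_nhds hfp))
  exact hu.not_isLocalMax_penalized hD htop hw₁ (pos_of_mul_pos_left hpos₁ (exp_pos _).le) hf₁ hh₁
    (half_pos hε) hN p hmax₁

end PSHOn

section DiscEstimate

variable {E : Type*} [NormedAddCommGroup E] [NormedSpace ℂ E] {f : ℂ → E} {ζ₀ : ℂ} {ρ s R t : ℝ}

lemma norm_canonicalFactor_zero (hρ : 0 ≤ ρ) (ζ₀ : ℂ) :
    ‖Complex.canonicalFactor ρ ζ₀ 0‖ = ρ / ‖ζ₀‖ := by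
  rcases hρ.eq_or_lt with rfl | hρ
  · simp [Complex.canonicalFactor_apply]
  · simp only [Complex.canonicalFactor_apply, mul_zero, sub_zero, zero_sub, norm_div, norm_mul,
      norm_neg, norm_pow, Complex.norm_real, norm_of_nonneg hρ.le]
    field_simp

lemma norm_canonicalFactor_of_mem_closedBall_diff_interior {ζ : ℂ} (hζ₀ : ‖ζ₀‖ < ρ)
    (hζ : ζ ∈ closedBall 0 ρ \ interior (closedBall 0 ρ)) :
    ‖Complex.canonicalFactor ρ ζ₀ ζ‖ = 1 := by
  rw [interior_closedBall _ ((norm_nonneg _).trans_lt hζ₀).ne', closedBall_sdiff_ball] at hζ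
  exact Complex.norm_canonicalFactor_eval_circle_eq_one (by simpa using hζ₀) hζ

lemma exists_analyticAt_norm_eq_mul_norm_canonicalFactor [CompleteSpace E] {U : Set ℂ}
    (hU : IsOpen U) (hf : DifferentiableOn ℂ f U) (hζ₀ : ζ₀ ∈ U) (ρ : ℝ) :
    ∃ F : ℂ → E, (∀ ζ ∈ U, AnalyticAt ℂ F ζ) ∧
      ∀ ζ ≠ ζ₀, ‖F ζ‖ = ‖f ζ - f ζ₀‖ * ‖Complex.canonicalFactor ρ ζ₀ ζ‖ := by
  refine ⟨fun ζ => ((ρ ^ 2 - conj ζ₀ * ζ) / ρ : ℂ) • dslope f ζ₀ ζ, fun ζ hζ => ?_, fun ζ hne => ?_⟩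
  · have := ((Complex.differentiableOn_dslope (hU.mem_nhds hζ₀)).2 hf).analyticAt (hU.mem_nhds hζ)
    fun_prop
  · beta_reduce
    rw [dslope_of_ne _ hne, slope_def_module, smul_smul, norm_smul, Complex.canonicalFactor_apply,
      ← div_div, div_eq_mul_inv _ (ζ - ζ₀), mul_comm]

/-- The maximum principle is applied to `v ‖β‖`, where `β` is the Blaschke factor of radius `ρ` with
a pole at `ζ₀`. Around the pole it is replaced by `‖f - f ζ₀‖ ‖β‖`. -/
theorem mul_le_norm_of_logSubharmonicAt [CompleteSpace E] {v : ℂ → ℝ}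
    (hf : DifferentiableOn ℂ f (ball 0 1)) (hv : UpperSemicontinuousOn v (ball 0 1))
    (hv0 : ∀ ζ, 0 ≤ v ζ) (hv1 : ∀ ζ ∈ ball 0 1, v ζ ≤ 1)
    (hsub : ∀ ζ ∈ ball 0 1, LogSubharmonicAt v ζ) (hζ₀ : ‖ζ₀‖ < ρ) (hρ : ρ < 1) (hs : 0 < s)
    (hsR : s < R) (hR : R ≤ 1) (hnear : ∀ ζ ∈ ball 0 1, ‖f ζ - f ζ₀‖ = s → v ζ ≤ s)
    (hfar : ∀ ζ ∈ ball 0 1, ‖f ζ - f ζ₀‖ = R → R ≤ v ζ) (h0 : s ≤ ‖f 0 - f ζ₀‖) :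
    v 0 * ρ ≤ ‖ζ₀‖ := by
  have hρ0 : 0 < ρ := (norm_nonneg _).trans_lt hζ₀
  have hball : closedBall (0 : ℂ) ρ ⊆ ball 0 1 := closedBall_subset_ball hρ
  have hint : interior (closedBall (0 : ℂ) ρ) ⊆ ball 0 1 := interior_subset.trans hball
  have hne {ζ : ℂ} (hζ : s ≤ ‖f ζ - f ζ₀‖) : ζ ≠ ζ₀ := by
    rintro rfl
    simp [hs.not_ge] at hζ
  set β := Complex.canonicalFactor ρ ζ₀
  have hβ {ζ : ℂ} (hζ : ζ ≠ ζ₀) : AnalyticAt ℂ β ζ :=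
    Complex.analyticOnNhd_canonicalFactor ρ ζ₀ ζ hζ
  have hβ1 {ζ : ℂ} (hζ : ζ ∈ closedBall 0 ρ \ interior (closedBall 0 ρ)) : ‖β ζ‖ = 1 :=
    norm_canonicalFactor_of_mem_closedBall_diff_interior hζ₀ hζ
  obtain ⟨F, hF, hFβ⟩ := exists_analyticAt_norm_eq_mul_norm_canonicalFactor isOpen_ball hf
    (show ζ₀ ∈ ball 0 1 by simpa using hζ₀.trans hρ) ρ
  have hle : v 0 * ‖β 0‖ ≤ 1 := by
    refine le_of_logSubharmonicAt_of_glue (P₁ := fun ζ => ‖F ζ‖) (P₂ := fun ζ => v ζ * ‖β ζ‖)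
      (δ := fun ζ => ‖f ζ - f ζ₀‖) (isCompact_closedBall 0 ρ)
      ((hf.continuousOn.mono hball).sub continuousOn_const).norm hsR
      (ContinuousOn.upperSemicontinuousOn fun ζ hζ =>
        (hF ζ (hball hζ.1)).continuousAt.norm.continuousWithinAt)
      (fun _ _ => norm_nonneg _)
      (upperSemicontinuousOn_mul (hv.mono (inter_subset_left.trans hball))
        (fun ζ hζ => (hβ (hne hζ.2)).continuousAt.norm.continuousWithinAt) fun _ _ => norm_nonneg _)
      (fun _ _ => mul_nonneg (hv0 _) (norm_nonneg _)) (fun ζ hζ hδ => ?_) (fun ζ hζ hδ => ?_)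
      (fun ζ hζ _ => logSubharmonicAt_norm (hF ζ (hint hζ)))
      (fun ζ hζ hδ => (hsub ζ (hint hζ)).mul_norm (hβ (hne hδ.le))) zero_le_one
      (fun ζ hζ hδ => ?_) (fun ζ hζ _ => by simpa [hβ1 hζ] using hv1 ζ (hball hζ.1))
      (mem_closedBall_self hρ0.le) h0
    · rw [hFβ ζ (hne hδ.ge), hδ]
      exact mul_le_mul_of_nonneg_right (hnear ζ (hball hζ) hδ) (norm_nonneg _)
    · rw [hFβ ζ (hne (hδ ▸ hsR.le)), hδ]
      exact mul_le_mul_of_nonneg_right (hfar ζ (hball hζ) hδ) (norm_nonneg _)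
    · have hζne : ζ ≠ ζ₀ := by
        rintro rfl
        simpa [β, Complex.canonicalFactor_apply_self] using hβ1 hζ
      rw [hFβ ζ hζne, hβ1 hζ, mul_one]
      exact hδ.trans hR
  have hζ₀0 : 0 < ‖ζ₀‖ := norm_pos_iff.2 (hne h0).symm
  rwa [norm_canonicalFactor_zero hρ0.le, ← mul_div_assoc, div_le_one hζ₀0] at hle

theorem PSHOn.erexp_le_norm {n : ℕ} {D : Set (Cn n)} {u : Cn n → EReal} (hu : PSHOn u D)
    (hD : IsOpen D) (hu0 : ∀ w ∈ D, u w ≤ 0) {f : ℂ → Cn n}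
    (hf : DifferentiableOn ℂ f (ball 0 1)) (hfD : MapsTo f (ball 0 1) D) (hζ₀ : ‖ζ₀‖ < 1)
    (hs : 0 < s) (hsR : s < R) (ht : 0 < t) (htR : t * R ≤ 1)
    (hnear : ∀ w ∈ D, ‖w - f ζ₀‖ = s → erexp (u w) ≤ t * s)
    (hfar : ∀ w ∈ D, ‖w - f ζ₀‖ = R → t * R ≤ erexp (u w)) (h0 : s ≤ ‖f 0 - f ζ₀‖) :
    erexp (u (f 0)) ≤ ‖ζ₀‖ := by
  have htop : ∀ w ∈ D, u w ≠ ⊤ := fun w hw => ne_top_of_le_ne_top EReal.zero_ne_top (hu0 w hw)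
  have hscale (ζ : ℂ) : ‖(t : ℂ) • f ζ - (t : ℂ) • f ζ₀‖ = t * ‖f ζ - f ζ₀‖ := by
    rw [← smul_sub, norm_smul, Complex.norm_real, norm_of_nonneg ht.le]
  have hlim : Tendsto (fun ρ => erexp (u (f 0)) * ρ) (𝓝[<] 1) (𝓝 (erexp (u (f 0)) * 1)) :=
    (Continuous.tendsto (by fun_prop) _).mono_left nhdsWithin_le_nhds
  rw [mul_one] at hlim
  refine le_of_tendsto hlim ?_
  filter_upwards [Ioo_mem_nhdsLT hζ₀] with ρ hρ
  refine mul_le_norm_of_logSubharmonicAt (v := fun ζ => erexp (u (f ζ))) (s := t * s) (R := t * R)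
    (hf.const_smul (t : ℂ)) ((upperSemicontinuousOn_erexp hu.1 htop).comp hf.continuousOn hfD)
    (fun _ => erexp_nonneg _) (fun ζ hζ => erexp_le_one (hu0 _ (hfD hζ)))
    (fun ζ hζ =>
      hu.logSubharmonicAt_comp hD htop (hf.analyticAt (isOpen_ball.mem_nhds hζ)) (hfD hζ))
    hρ.1 hρ.2 (mul_pos ht hs) (mul_lt_mul_of_pos_left hsR ht) htR (fun ζ hζ hδ => ?_)
    (fun ζ hζ hδ => ?_) ?_
  · exact hnear _ (hfD hζ) (mul_left_cancel₀ ht.ne' ((hscale ζ).symm.trans hδ))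
  · exact hfar _ (hfD hζ) (mul_left_cancel₀ ht.ne' ((hscale ζ).symm.trans hδ))
  · exact (mul_le_mul_of_nonneg_left h0 ht.le).trans_eq (hscale 0).symm

end DiscEstimate

section Kobayashi

variable {n : ℕ} {D E U : Set (Cn n)} {u : Cn n → EReal} {z : Cn n} {ρ s R t : ℝ}

/-- The set of `‖α‖` competing in the infimum that defines `kobayashi D z X`; if it is empty, the
infimum is `0`. -/
def kobayashiSet (D : Set (Cn n)) (z X : Cn n) : Set ℝ :=
  {c : ℝ | ∃ α : ℂ, c = ‖α‖ ∧ ∃ f : ℂ → Cn n, DifferentiableOn ℂ f (ball 0 1) ∧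
    MapsTo f (ball 0 1) D ∧ f 0 = z ∧ α • deriv f 0 = X}

lemma kobayashi_eq_sInf (D : Set (Cn n)) (z X : Cn n) :
    kobayashi D z X = sInf (kobayashiSet D z X) :=
  rfl

lemma kobayashiSet_mono (hED : E ⊆ D) (z X : Cn n) : kobayashiSet E z X ⊆ kobayashiSet D z X := by
  rintro _ ⟨α, hα, f, hf, hfE, hfz⟩
  exact ⟨α, hα, f, hf, hfE.mono_right hED, hfz⟩

lemma nonneg_of_mem_kobayashiSet {X : Cn n} {c : ℝ} (hc : c ∈ kobayashiSet D z X) : 0 ≤ c := by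
  obtain ⟨α, rfl, -⟩ := hc
  exact norm_nonneg α

lemma kobayashi_nonneg (D : Set (Cn n)) (z X : Cn n) : 0 ≤ kobayashi D z X :=
  Real.sInf_nonneg fun _ => nonneg_of_mem_kobayashiSet

lemma kobayashi_le_norm {f : ℂ → Cn n} (hf : DifferentiableOn ℂ f (ball 0 1))
    (hfD : MapsTo f (ball 0 1) D) (α : ℂ) : kobayashi D (f 0) (α • deriv f 0) ≤ ‖α‖ :=
  csInf_le ⟨0, fun _ => nonneg_of_mem_kobayashiSet⟩ ⟨α, rfl, f, hf, hfD, rfl, rfl⟩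

lemma mul_kobayashi_le_norm (hρ0 : 0 < ρ) (hρ1 : ρ ≤ 1) {f : ℂ → Cn n}
    (hf : DifferentiableOn ℂ f (ball 0 1)) (hfD : MapsTo f (ball 0 ρ) D) (α : ℂ) :
    ρ * kobayashi D (f 0) (α • deriv f 0) ≤ ‖α‖ := by
  have hmaps : MapsTo (fun ζ : ℂ => (ρ : ℂ) * ζ) (ball 0 1) (ball 0 ρ) := fun ζ hζ => by
    rw [mem_ball_zero_iff] at hζ ⊢
    rw [norm_mul, Complex.norm_real, norm_of_nonneg hρ0.le]
    exact mul_lt_of_lt_one_right hρ0 hζ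
  have hle := kobayashi_le_norm (f := fun ζ => f (ρ * ζ)) (D := D)
    (hf.comp (by fun_prop) (hmaps.mono_right (ball_subset_ball hρ1))) (hfD.comp hmaps) (α / ρ)
  have hρ : (ρ : ℂ) ≠ 0 := by exact_mod_cast hρ0.ne'
  rw [deriv_comp_mul_left, mul_zero, smul_smul, div_mul_cancel₀ α hρ, norm_div, Complex.norm_real,
    norm_of_nonneg hρ0.le, le_div_iff₀' hρ0] at hle
  exact hle

lemma mul_kobayashi_le_kobayashi (hρ0 : 0 ≤ ρ) (hρ1 : ρ ≤ 1) (hED : E ⊆ D)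
    (hdisc : ∀ f : ℂ → Cn n, DifferentiableOn ℂ f (ball 0 1) → MapsTo f (ball 0 1) D → f 0 = z →
      MapsTo f (ball 0 ρ) E) (X : Cn n) :
    ρ * kobayashi E z X ≤ kobayashi D z X := by
  rcases hρ0.eq_or_lt with rfl | hρ0
  · rw [zero_mul]
    exact kobayashi_nonneg D z X
  obtain hempty | hne := (kobayashiSet D z X).eq_empty_or_nonempty
  · have hemptyE : kobayashiSet E z X = ∅ :=
      subset_empty_iff.1 ((kobayashiSet_mono hED z X).trans_eq hempty)
    rw [kobayashi_eq_sInf, kobayashi_eq_sInf, hemptyE, hempty, Real.sInf_empty, mul_zero]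
  · refine le_csInf hne ?_
    rintro _ ⟨α, rfl, f, hf, hfD, rfl, rfl⟩
    exact mul_kobayashi_le_norm hρ0 hρ1 hf (hdisc f hf hfD rfl) α

theorem PSHOn.erexp_mul_kobayashi_inter_le (hu : PSHOn u D) (hD : IsOpen D)
    (hu0 : ∀ w ∈ D, u w ≤ 0) (hz : z ∈ D) (hs : 0 < s) (hsR : s < R) (ht : 0 < t) (htR : t * R ≤ 1)
    (hnear : ∀ w₀ ∈ D \ U, ∀ w ∈ D, ‖w - w₀‖ = s → erexp (u w) ≤ t * s)
    (hfar : ∀ w₀ ∈ D \ U, ∀ w ∈ D, ‖w - w₀‖ = R → t * R ≤ erexp (u w))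
    (hdist : ∀ w₀ ∈ D \ U, s ≤ ‖z - w₀‖) (X : Cn n) :
    erexp (u z) * kobayashi (D ∩ U) z X ≤ kobayashi D z X := by
  have huz : erexp (u z) ≤ 1 := erexp_le_one (hu0 z hz)
  refine mul_kobayashi_le_kobayashi (erexp_nonneg _) huz inter_subset_left ?_ X
  rintro f hf hfD rfl ζ₀ hζ₀
  rw [mem_ball_zero_iff] at hζ₀
  have hζ₀1 : ‖ζ₀‖ < 1 := hζ₀.trans_le huz
  have hfζ₀ : f ζ₀ ∈ D := hfD (mem_ball_zero_iff.2 hζ₀1)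
  refine ⟨hfζ₀, ?_⟩
  by_contra hU
  exact hζ₀.not_ge <| hu.erexp_le_norm hD hu0 hf hfD hζ₀1 hs hsR ht htR (hnear _ ⟨hfζ₀, hU⟩)
    (hfar _ ⟨hfζ₀, hU⟩) (hdist _ ⟨hfζ₀, hU⟩)

end Kobayashi

lemma PSHOn.const_mul {n : ℕ} {D : Set (Cn n)} {u : Cn n → EReal} (hu : PSHOn u D) {m : ℝ}
    (hm : 0 < m) : PSHOn (fun z => (m : EReal) * u z) D := by
  have hm' : (0 : EReal) < m := EReal.coe_pos.2 hm
  have hle {x : EReal} {y : ℝ} : (m : EReal) * x ≤ y ↔ x ≤ (y / m : ℝ) := by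
    rw [EReal.coe_div, EReal.le_div_iff_mul_le hm' (EReal.coe_ne_top m), mul_comm]
  refine ⟨fun z hz y hy => ?_, fun a ha b r hr hdisc g hg hgu => ?_⟩
  · have hlt {x : EReal} : (m : EReal) * x < y ↔ x < y / m := by
      rw [EReal.lt_div_iff hm' (EReal.coe_ne_top m), mul_comm]
    filter_upwards [hu.1 z hz _ (hlt.1 hy)] with w hw using hlt.2 hw
  · have := hu.2 a ha b r hr hdisc (fun θ => g θ / m) (hg.div_const m) fun θ => hle.1 (hgu θ)
    rwa [intervalIntegral.integral_div, ← mul_div_assoc, ← hle] at this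

namespace IsPshPeakFnAtInfty

variable {n : ℕ} {D : Set (Cn n)} {φ : Cn n → EReal}

lemma exists_forall_le_neg (hφ : IsPshPeakFnAtInfty D φ) (r : ℝ) :
    ∃ c > 0, ∀ z ∈ D, ‖z‖ ≤ r → φ z ≤ (-c : ℝ) := by
  obtain ⟨c, hc, hle⟩ := hφ.2.2 {z | r < ‖z‖} (tendsto_norm_cobounded_atTop.eventually_gt_atTop r)
  exact ⟨-c, neg_pos.2 hc, fun z hz hzr => by simpa using hle z ⟨hz, by simpa using hzr⟩⟩

lemma lt_zero (hφ : IsPshPeakFnAtInfty D φ) {z : Cn n} (hz : z ∈ D) : φ z < 0 := by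
  obtain ⟨c, hc, hle⟩ := hφ.exists_forall_le_neg ‖z‖
  exact (hle z hz le_rfl).trans_lt (by exact_mod_cast neg_neg_of_pos hc)

lemma exists_forall_neg_le (hφ : IsPshPeakFnAtInfty D φ) {c : ℝ} (hc : 0 < c) :
    ∃ ρ : ℝ, ∀ z ∈ D, ρ ≤ ‖z‖ → ((-c : ℝ) : EReal) ≤ φ z := by
  have hev := eventually_inf_principal.1 <| hφ.2.1.eventually_const_le
    (show ((-c : ℝ) : EReal) < 0 by exact_mod_cast neg_neg_of_pos hc)
  obtain ⟨ρ, -, hρ⟩ := hasBasis_cobounded_norm.eventually_iff.1 hev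
  exact ⟨ρ, fun z hz hzρ => hρ hzρ hz⟩

lemma const_mul_nonpos (hφ : IsPshPeakFnAtInfty D φ) {m : ℝ} (hm : 0 ≤ m) {z : Cn n} (hz : z ∈ D) :
    (m : EReal) * φ z ≤ 0 :=
  mul_nonpos_of_nonneg_of_nonpos (EReal.coe_nonneg.2 hm) (hφ.lt_zero hz).le

/-- The two bounds correspond to `φ ≤ -c` and `-c / 2 ≤ φ`, with `e ^ (-m c) = (r / R) ^ 2`. -/
lemma exists_erexp_mul_bounds (hφ : IsPshPeakFnAtInfty D φ) {r : ℝ} (hr : 0 < r) (r' : ℝ) :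
    ∃ R > r, ∃ m : ℝ, 0 < m ∧ (∀ w ∈ D, ‖w‖ ≤ r' → erexp (m * φ w) ≤ (r / R) ^ 2) ∧
      ∀ w ∈ D, R - r ≤ ‖w‖ → r / R ≤ erexp (m * φ w) := by
  obtain ⟨c, hc, hnear⟩ := hφ.exists_forall_le_neg r'
  obtain ⟨ρ, hfar⟩ := hφ.exists_forall_neg_le (half_pos hc)
  obtain ⟨R, hR, hρR⟩ : ∃ R > r, ρ ≤ R - r :=
    ⟨|ρ| + 2 * r, by linarith [abs_nonneg ρ], by linarith [le_abs_self ρ]⟩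
  set m := 2 * log (R / r) / c
  have hm : 0 < m := div_pos (mul_pos two_pos (log_pos ((one_lt_div hr).2 hR))) hc
  have hm' : (0 : EReal) ≤ m := by exact_mod_cast hm.le
  have hexp : exp (m * -(c / 2)) = r / R := by
    rw [show m * -(c / 2) = -log (R / r) by simp only [m]; field_simp, exp_neg,
      exp_log (div_pos (hr.trans hR) hr), inv_div]
  have htop {w : Cn n} (hw : w ∈ D) : (m : EReal) * φ w ≠ ⊤ :=
    ne_top_of_le_ne_top EReal.zero_ne_top (hφ.const_mul_nonpos hm.le hw)
  refine ⟨R, hR, m, hm, fun w hw hwr => ?_, fun w hw hwR => ?_⟩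
  · rw [← hexp, ← exp_nat_mul, erexp_le_exp_iff (htop hw)]
    calc (m : EReal) * φ w ≤ m * (-c : ℝ) := mul_le_mul_of_nonneg_left (hnear w hw hwr) hm'
      _ = ((2 : ℕ) * (m * -(c / 2)) : ℝ) := by rw [← EReal.coe_mul]; congr 1; push_cast; ring
  · rw [← hexp]
    refine exp_le_erexp (htop hw) ?_
    rw [EReal.coe_mul]
    exact mul_le_mul_of_nonneg_left (hfar w hw (hρR.trans hwR)) hm'

end IsPshPeakFnAtInfty

theorem kobayashi_localization_at_infty_general {n : ℕ} {D : Set (Cn n)} (hD : IsOpen D)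
    {φ : Cn n → EReal} (hφ : IsPshPeakFnAtInfty D φ) {U : Set (Cn n)}
    (hU : U ∈ Bornology.cobounded (Cn n)) :
    ∃ V ∈ Bornology.cobounded (Cn n), V ⊆ U ∧ ∃ m : ℝ, 0 < m ∧ ∀ z ∈ D ∩ V, ∀ X : Cn n,
      erexp (m * φ z) * kobayashi (D ∩ U) z X ≤ kobayashi D z X := by
  obtain ⟨r, hr, hUr⟩ : ∃ r > 0, ∀ w ∉ U, ‖w‖ ≤ r :=
    (Bornology.isBounded_compl_iff.2 hU).exists_pos_norm_le
  obtain ⟨R, hrR, m, hm, hnear, hfar⟩ := hφ.exists_erexp_mul_bounds hr (2 * r)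
  have hR : 0 < R := hr.trans hrR
  refine ⟨{z | 2 * r < ‖z‖}, tendsto_norm_cobounded_atTop.eventually_gt_atTop _,
    fun z (hzr : 2 * r < ‖z‖) => ?_, m, hm, fun z ⟨hz, (hzr : 2 * r < ‖z‖)⟩ X => ?_⟩
  · by_contra hzU
    linarith [hUr z hzU]
  refine (hφ.1.const_mul hm).erexp_mul_kobayashi_inter_le hD
    (fun w hw => hφ.const_mul_nonpos hm.le hw) hz hr hrR
    (t := r / R ^ 2) (by positivity) ?_ (fun w₀ hw₀ w hw hws => ?_) (fun w₀ hw₀ w hw hwR => ?_)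
    (fun w₀ hw₀ => ?_) X
  · rw [div_mul_eq_mul_div, div_le_one (by positivity)]
    nlinarith
  · refine (hnear w hw ?_).trans_eq (by ring)
    linarith [hUr w₀ hw₀.2, norm_le_insert' w w₀]
  · rw [show r / R ^ 2 * R = r / R by field_simp]
    refine hfar w hw ?_
    linarith [hUr w₀ hw₀.2, norm_sub_le w w₀]
  · linarith [hUr w₀ hw₀.2, norm_le_insert' z w₀]

/-- Quantitative localization of the Kobayashi metric at `∞` for an
unbounded domain with a psh peak function at `∞`. -/
theorem kobayashi_localization_at_infty {n : ℕ} (D : Set (Cn n)) (hD : IsOpen D)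
    (hDconn : IsConnected D) (hDunb : ¬ Bornology.IsBounded D)
    (φ : Cn n → EReal) (hφ : IsPshPeakFnAtInfty D φ) :
    ∀ U ∈ Bornology.cobounded (Cn n), ∃ V ∈ Bornology.cobounded (Cn n), V ⊆ U ∧
      ∃ m : ℝ, 0 < m ∧ ∀ z ∈ D ∩ V, ∀ X : Cn n,
        kobayashi D z X ≥ erexp ((m : EReal) * φ z) * kobayashi (D ∩ U) z X :=
  fun _ hU => kobayashi_localization_at_infty_general hD hφ hU
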